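/- Let f : [a₁,b₁] → ℝ be continuous, let b* ∈ (a₁,b₁], and suppose f ≡ 0 on [b*,b₁]. Suppose that for each n ≥ 1 there exists a real polynomial R_n of degree ≤ n such that sup_{x ∈ [a₁,b₁]} |f(x) − R_n(x) qₙ(x)| → 0 as n → ∞. Then the quadrature sums restricted to the nodes in [a₁,b₁] converge to the integral: lim_{n→∞} ∑_{j=1}^{n} λ_{j,2n}^{(1)} f(x_{j,2n}) = ∫_{[a₁,b₁]} f(x) dμ₁(x). -/

import Mathlib

open MeasureTheory

/-- The data of the diagonal type II multiple orthogonal polynomial for an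
Angelesco system with two intervals: its `2n` zeros, listed in increasing
order, with `n` of them in `(a₁,b₁)` and `n` of them in `(a₂,b₂)`, and the
multiple orthogonality conditions. -/
structure Angelesco (μ₁ μ₂ : Measure ℝ) (a₁ b₁ a₂ b₂ : ℝ) (n : ℕ) where
  x : Fin (2 * n) → ℝ
  mono : StrictMono x
  mem1 : ∀ i : Fin (2 * n), (i : ℕ) < n → x i ∈ Set.Ioo a₁ b₁
  mem2 : ∀ i : Fin (2 * n), n ≤ (i : ℕ) → x i ∈ Set.Ioo a₂ b₂
  orth1 : ∀ k < n, ∫ t, (∏ i, (t - x i)) * t ^ k ∂μ₁ = 0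
  orth2 : ∀ k < n, ∫ t, (∏ i, (t - x i)) * t ^ k ∂μ₂ = 0

/-- The quadrature weight `λ_{k,2n}^{(μ)} = ∫ ℓ_{k,2n} dμ`, where `ℓ_{k,2n}` is the
`k`-th fundamental Lagrange polynomial for the nodes `x_{1,2n} < ⋯ < x_{2n,2n}`. -/
noncomputable def qweight {μ₁ μ₂ : Measure ℝ} {a₁ b₁ a₂ b₂ : ℝ} {n : ℕ}
    (ad : Angelesco μ₁ μ₂ a₁ b₁ a₂ b₂ n) (μ : Measure ℝ) (k : Fin (2 * n)) : ℝ :=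
  ∫ t, (Lagrange.basis Finset.univ ad.x k).eval t ∂μ

noncomputable def angA : List ℝ → List ℝ → ℝ
  | _, [] => 0
  | [], [_] => 1
  | [], _ :: _ :: _ => 0
  | c :: C, z :: Z => (angA C (z :: Z) + angA (c :: C) Z) / (z - c)
termination_by C Z => C.length + Z.length

noncomputable def angW : List ℝ → Polynomial ℝ
  | [] => 1
  | z :: Z => (Polynomial.C z - Polynomial.X) * angW Z

noncomputable def angS (C : List ℝ) : List ℝ → Polynomial ℝ
  | [] => 0
  | z :: Z => angS C Z + Polynomial.C (angA C (z :: Z)) * angW Z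

lemma angA_nil_right (C : List ℝ) : angA C [] = 0 := by
  cases C <;> simp [angA]

lemma angA_nonneg (C Z : List ℝ) (h : ∀ c ∈ C, ∀ z ∈ Z, c < z) : 0 ≤ angA C Z := by
  induction C generalizing Z with
  | nil =>
    rcases Z with _ | ⟨z, _ | ⟨w, Z⟩⟩ <;> simp [angA]
  | cons c C ih =>
    induction Z with
    | nil => simp [angA]
    | cons z Z ihZ =>
      rw [angA]
      have h1 := ih (z :: Z) (fun c' hc' => h c' (List.mem_cons_of_mem _ hc'))
      have h2 := ihZ (fun c' hc' z' hz' => h c' hc' z' (List.mem_cons_of_mem _ hz'))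
      have h3 := h c (by simp) z (by simp)
      exact div_nonneg (by linarith) (by linarith)

lemma angW_nonneg (Z : List ℝ) (y : ℝ) (h : ∀ z ∈ Z, y ≤ z) : 0 ≤ (angW Z).eval y := by
  induction Z with
  | nil => simp [angW]
  | cons z Z ih =>
    simp only [angW, Polynomial.eval_mul, Polynomial.eval_sub, Polynomial.eval_C,
      Polynomial.eval_X]
    exact mul_nonneg (by linarith [h z (by simp)])
      (ih (fun w hw => h w (List.mem_cons_of_mem _ hw)))

lemma angW_zero (Z : List ℝ) (y : ℝ) (h : y ∈ Z) : (angW Z).eval y = 0 := by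
  induction Z with
  | nil => simp at h
  | cons z Z ih =>
    simp only [angW, Polynomial.eval_mul, Polynomial.eval_sub, Polynomial.eval_C,
      Polynomial.eval_X]
    rcases List.mem_cons.1 h with rfl | h
    · simp
    · simp [ih h]

lemma angW_deg (Z : List ℝ) : (angW Z).natDegree ≤ Z.length := by
  induction Z with
  | nil => simp [angW]
  | cons z Z ih =>
    rw [angW]
    refine Polynomial.natDegree_mul_le.trans ?_
    have : (Polynomial.C z - Polynomial.X : Polynomial ℝ).natDegree ≤ 1 := by
      compute_degree
    simp only [List.length_cons]
    omega

lemma angS_deg (C Z : List ℝ) : (angS C Z).natDegree ≤ Z.length - 1 := by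
  induction Z with
  | nil => simp [angS]
  | cons z Z ih =>
    rw [angS]
    refine (Polynomial.natDegree_add_le _ _).trans (max_le ?_ ?_)
    · simp only [List.length_cons]; omega
    · refine (Polynomial.natDegree_C_mul_le _ _).trans ?_
      simpa using angW_deg Z

lemma angS_nonneg (C Z : List ℝ) (h : ∀ c ∈ C, ∀ z ∈ Z, c < z) (y : ℝ)
    (hy : ∀ z ∈ Z, y ≤ z) : 0 ≤ (angS C Z).eval y := by
  induction Z with
  | nil => simp [angS]
  | cons z Z ih =>
    simp only [angS, Polynomial.eval_add, Polynomial.eval_mul, Polynomial.eval_C]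
    have h1 := ih (fun c hc w hw => h c hc w (List.mem_cons_of_mem _ hw))
      (fun w hw => hy w (List.mem_cons_of_mem _ hw))
    have h2 := angW_nonneg Z y (fun w hw => hy w (List.mem_cons_of_mem _ hw))
    have h3 := angA_nonneg C (z :: Z) h
    positivity

lemma angS_step (c : ℝ) (C Z : List ℝ) (h : ∀ z ∈ Z, c < z) (y : ℝ) :
    (y - c) * (angS (c :: C) Z).eval y
      = (angS C Z).eval y - angA (c :: C) Z * (angW Z).eval y := by
  induction Z with
  | nil => simp [angS, angA]
  | cons z Z ih =>
    have h1 := ih (fun w hw => h w (List.mem_cons_of_mem _ hw))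
    have h3 : z - c ≠ 0 := by linarith [h z (by simp)] |> fun (h : 0 < z - c) => h.ne'
    have h2 : (z - c) * angA (c :: C) (z :: Z) = angA C (z :: Z) + angA (c :: C) Z := by
      conv_lhs => rw [angA]
      field_simp
    simp only [angS, angW, Polynomial.eval_add, Polynomial.eval_mul, Polynomial.eval_C,
      Polynomial.eval_sub, Polynomial.eval_X]
    linear_combination h1 + (angW Z).eval y * h2

lemma angS_nil (Z : List ℝ) (hZ : Z ≠ []) : angS [] Z = 1 := by
  induction Z with
  | nil => simp at hZ
  | cons z Z ih =>
    rcases Z with _ | ⟨w, Z⟩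
    · simp [angS, angA, angW]
    · rw [angS, ih (by simp)]; simp [angA]

lemma angS_interp (C Z : List ℝ) (h : ∀ c ∈ C, ∀ z ∈ Z, c < z) (z : ℝ) (hz : z ∈ Z) :
    (C.map (fun c => z - c)).prod * (angS C Z).eval z = 1 := by
  induction C with
  | nil => rw [angS_nil Z (List.ne_nil_of_mem hz)]; simp
  | cons c C ih =>
    have h1 := angS_step c C Z (h c (by simp)) z
    rw [angW_zero Z z hz] at h1
    have h2 := ih (fun c hc => h c (List.mem_cons_of_mem _ hc))
    simp only [List.map_cons, List.prod_cons]
    linear_combination (List.map (fun c => z - c) C).prod * h1 + h2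

/-- Finset version. -/
lemma ang_exists_S {ι : Type*} (s t : Finset ι) (x : ι → ℝ)
    (h : ∀ i ∈ s, ∀ j ∈ t, x i < x j) :
    ∃ S : Polynomial ℝ, S.natDegree ≤ t.card - 1 ∧
      (∀ j ∈ t, (∏ i ∈ s, (x j - x i)) ^ 2 * S.eval (x j) = 1) ∧
      ∀ y, (∀ j ∈ t, y ≤ x j) → 0 ≤ S.eval y := by
  let C := s.toList.map x
  let Z := t.toList.map x
  have hC : ∀ c ∈ C ++ C, ∀ z ∈ Z, c < z := by
    intro c hc z hz
    simp only [C, Z, List.mem_append, List.mem_map, Finset.mem_toList, or_self] at hc hz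
    obtain ⟨i, hi, rfl⟩ := hc
    obtain ⟨j, hj, rfl⟩ := hz
    exact h i hi j hj
  refine ⟨angS (C ++ C) Z, ?_, ?_, ?_⟩
  · simpa [Z] using angS_deg (C ++ C) Z
  · intro j hj
    have := angS_interp (C ++ C) Z hC (x j) (by simp [Z]; exact ⟨j, hj, rfl⟩)
    rw [List.map_append, List.prod_append] at this
    have e : (C.map (fun c => x j - c)).prod = ∏ i ∈ s, (x j - x i) := by
      simp only [C, List.map_map]
      rw [← Finset.prod_map_toList]; rfl
    rw [e] at this
    rw [← this]; ring
  · intro y hy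
    apply angS_nonneg _ _ hC
    intro z hz
    simp only [Z, List.mem_map, Finset.mem_toList] at hz
    obtain ⟨j, hj, rfl⟩ := hz
    exact hy j hj

lemma ang_integrable_poly (μ : Measure ℝ) (hmom : ∀ k : ℕ, Integrable (fun t : ℝ => t ^ k) μ)
    (P : Polynomial ℝ) : Integrable (fun t => P.eval t) μ := by
  simp only [Polynomial.eval_eq_sum_range]
  exact integrable_finsetSum _ (fun i _ => (hmom i).const_mul _)

lemma ang_quad {μ₁ μ₂ : Measure ℝ} {a₁ b₁ a₂ b₂ : ℝ} {n : ℕ}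
    (ad : Angelesco μ₁ μ₂ a₁ b₁ a₂ b₂ n) (hn : 1 ≤ n)
    (hmom : ∀ k : ℕ, Integrable (fun t : ℝ => t ^ k) μ₁)
    (P : Polynomial ℝ) (hP : P.natDegree < 3 * n) :
    ∑ k, qweight ad μ₁ k * P.eval (ad.x k) = ∫ t, P.eval t ∂μ₁ := by
  have hI := ang_integrable_poly μ₁ hmom
  set w : Polynomial ℝ := Lagrange.nodal Finset.univ ad.x with hw
  have hwm : w.Monic := Lagrange.nodal_monic
  have hwd : w.natDegree = 2 * n := by simp [hw, Lagrange.natDegree_nodal]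
  have hwe : ∀ t, w.eval t = ∏ i, (t - ad.x i) := fun t => by
    simp [hw, Lagrange.eval_nodal]
  set Q := P /ₘ w
  set r := P %ₘ w with hr
  have hdiv : r + w * Q = P := Polynomial.modByMonic_add_div P w
  have hQd : Q.natDegree < n := by
    have := Polynomial.natDegree_divByMonic P hwm
    rw [hwd] at this; simp only [Q]; omega
  have h0 : ∫ t, (w * Q).eval t ∂μ₁ = 0 := by
    have : ∀ t, (w * Q).eval t
        = ∑ k ∈ Finset.range (Q.natDegree + 1), Q.coeff k * ((∏ i, (t - ad.x i)) * t ^ k) := by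
      intro t
      rw [Polynomial.eval_mul, hwe, Polynomial.eval_eq_sum_range, Finset.mul_sum]
      exact Finset.sum_congr rfl (fun k _ => by ring)
    simp only [this]
    rw [integral_finsetSum]
    · refine Finset.sum_eq_zero (fun k hk => ?_)
      rw [integral_const_mul, ad.orth1 k (by have := Finset.mem_range.1 hk; omega), mul_zero]
    · intro k _
      have := hI (w * Polynomial.X ^ k)
      simp only [Polynomial.eval_mul, hwe, Polynomial.eval_pow, Polynomial.eval_X] at this
      exact this.const_mul _
  have hrd : r.degree < (Finset.univ : Finset (Fin (2 * n))).card := by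
    have := Polynomial.degree_modByMonic_lt P hwm
    rw [Polynomial.degree_eq_natDegree hwm.ne_zero, hwd] at this
    simpa [hr] using this
  have hre : ∀ k, P.eval (ad.x k) = r.eval (ad.x k) := fun k => by
    rw [← hdiv, Polynomial.eval_add, Polynomial.eval_mul, hw,
      Lagrange.eval_nodal_at_node (Finset.mem_univ k)]
    simp
  have hint := Lagrange.eq_interpolate (s := Finset.univ) (v := ad.x) (f := r)
    (ad.mono.injective.injOn) hrd
  have h1 : ∫ t, P.eval t ∂μ₁ = ∫ t, r.eval t ∂μ₁ := by
    have : ∀ t, P.eval t = r.eval t + (w * Q).eval t := fun t => by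
      rw [← Polynomial.eval_add, hdiv]
    simp only [this]
    rw [integral_add (hI r) (hI _), h0, add_zero]
  rw [h1]
  have h2 : ∀ t, r.eval t = ∑ k, (Lagrange.basis Finset.univ ad.x k).eval t * r.eval (ad.x k) := by
    intro t
    conv_lhs => rw [hint]
    rw [Lagrange.interpolate_apply, Polynomial.eval_finsetSum]
    exact Finset.sum_congr rfl (fun k _ => by simp [mul_comm])
  rw [integral_congr_ae (Filter.Eventually.of_forall h2)]
  rw [integral_finsetSum _ (fun k _ => (hI _).mul_const _)]
  refine Finset.sum_congr rfl (fun k _ => ?_)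
  rw [integral_mul_const, hre]; rfl

lemma ang_card_right (n : ℕ) :
    (Finset.univ.filter (fun i : Fin (2 * n) => n ≤ (i : ℕ))).card = n ∧
    (Finset.univ.filter (fun i : Fin (2 * n) => (i : ℕ) < n)).card = n := by
  have h1 : (Finset.univ.filter (fun i : Fin (2 * n) => (i : ℕ) < n)).card = n := by
    rw [Fin.card_filter_val_lt]; omega
  have h2 := Finset.card_filter_add_card_filter_not (s := (Finset.univ : Finset (Fin (2 * n))))
    (fun i : Fin (2 * n) => (i : ℕ) < n)
  simp only [not_lt, Finset.card_univ, Fintype.card_fin] at h2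
  exact ⟨by omega, h1⟩

lemma ang_prod_deg {ι : Type*} (s : Finset ι) (x : ι → ℝ) :
    (∏ i ∈ s, (Polynomial.C (x i) - Polynomial.X) : Polynomial ℝ).natDegree ≤ s.card := by
  refine (Polynomial.natDegree_prod_le _ _).trans ?_
  refine (Finset.sum_le_card_nsmul _ _ 1 (fun i _ => ?_)).trans (by simp)
  compute_degree

lemma ang_weight_nonneg {μ₁ μ₂ : Measure ℝ} {a₁ b₁ a₂ b₂ : ℝ} {n : ℕ} (hgap : b₁ ≤ a₂)
    (hsupp : ∀ᵐ t ∂μ₁, t ∈ Set.Icc a₁ b₁)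
    (ad : Angelesco μ₁ μ₂ a₁ b₁ a₂ b₂ n) (hn : 1 ≤ n)
    (hmom : ∀ k : ℕ, Integrable (fun t : ℝ => t ^ k) μ₁)
    (j : Fin (2 * n)) (hj : (j : ℕ) < n) : 0 ≤ qweight ad μ₁ j := by
  set L := Finset.univ.filter (fun i : Fin (2 * n) => (i : ℕ) < n)
  set U := Finset.univ.filter (fun i : Fin (2 * n) => n ≤ (i : ℕ))
  have hjL : j ∈ L := by simp [L, hj]
  have hL : L.card = n := (ang_card_right n).2
  have hU : U.card = n := (ang_card_right n).1
  let P : Polynomial ℝ := (∏ i ∈ U, (Polynomial.C (ad.x i) - Polynomial.X)) *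
    (∏ i ∈ L.erase j, (Polynomial.C (ad.x i) - Polynomial.X)) ^ 2
  have hPe : ∀ t, P.eval t = (∏ i ∈ U, (ad.x i - t)) * (∏ i ∈ L.erase j, (ad.x i - t)) ^ 2 := by
    intro t; simp [P, Polynomial.eval_prod]
  have hd : P.natDegree < 3 * n := by
    have h1 := ang_prod_deg U ad.x
    have h2 := ang_prod_deg (L.erase j) ad.x
    rw [Finset.card_erase_of_mem hjL] at h2
    have h3 := Polynomial.natDegree_pow_le_of_le 2 h2
    have := Polynomial.natDegree_mul_le_of_le h1 h3
    simp only [P]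
    omega
  have hq := ang_quad ad hn hmom P hd
  have hpos : 0 ≤ ∫ t, P.eval t ∂μ₁ := by
    apply integral_nonneg_of_ae
    filter_upwards [hsupp] with t ht
    rw [hPe]
    refine mul_nonneg (Finset.prod_nonneg (fun i hi => ?_)) (sq_nonneg _)
    have := (ad.mem2 i (by simpa [U] using hi)).1
    linarith [ht.2]
  rw [Finset.sum_eq_single j] at hq
  · have hPj : 0 < P.eval (ad.x j) := by
      rw [hPe]
      refine mul_pos (Finset.prod_pos (fun i hi => ?_)) (sq_pos_of_ne_zero ?_)
      · have := (ad.mem2 i (by simpa [U] using hi)).1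
        linarith [(ad.mem1 j hj).2]
      · refine Finset.prod_ne_zero_iff.2 (fun i hi => ?_)
        exact sub_ne_zero.2 (fun h => (Finset.mem_erase.1 hi).1 (ad.mono.injective h))
    rw [← hq] at hpos
    exact nonneg_of_mul_nonneg_left hpos hPj
  · intro k _ hk
    rw [hPe]
    by_cases hkn : (k : ℕ) < n
    · rw [Finset.prod_eq_zero (s := L.erase j) (i := k) (by simp [L, hk, hkn]) (sub_self _)]
      simp
    · rw [Finset.prod_eq_zero (s := U) (i := k) (by simp [U]; omega) (sub_self _)]
      simp
  · simp

lemma ang_weight_sum {μ₁ μ₂ : Measure ℝ} [IsFiniteMeasure μ₁]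
    {a₁ b₁ a₂ b₂ : ℝ} {n : ℕ} (hgap : b₁ ≤ a₂)
    (hsupp : ∀ᵐ t ∂μ₁, t ∈ Set.Icc a₁ b₁)
    (ad : Angelesco μ₁ μ₂ a₁ b₁ a₂ b₂ n) (hn : 1 ≤ n)
    (hmom : ∀ k : ℕ, Integrable (fun t : ℝ => t ^ k) μ₁) :
    ∑ i ∈ Finset.univ.filter (fun i : Fin (2 * n) => (i : ℕ) < n), qweight ad μ₁ i
      ≤ μ₁.real Set.univ := by
  set L := Finset.univ.filter (fun i : Fin (2 * n) => (i : ℕ) < n) with hLdef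
  set U := Finset.univ.filter (fun i : Fin (2 * n) => n ≤ (i : ℕ)) with hUdef
  have hL : L.card = n := (ang_card_right n).2
  have hU : U.card = n := (ang_card_right n).1
  obtain ⟨S, hSd, hS1, hS0⟩ := ang_exists_S L U ad.x (fun i hi j hj => ad.mono (by
    simp only [L, U, Finset.mem_filter, Finset.mem_univ, true_and] at hi hj
    exact Fin.lt_def.2 (by omega)))
  let T : Polynomial ℝ := (∏ i ∈ L, (Polynomial.C (ad.x i) - Polynomial.X)) ^ 2 * S
  have hTe : ∀ t, T.eval t = (∏ i ∈ L, (t - ad.x i)) ^ 2 * S.eval t := by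
    intro t
    simp only [T, Polynomial.eval_mul, Polynomial.eval_pow, Polynomial.eval_prod,
      Polynomial.eval_sub, Polynomial.eval_C, Polynomial.eval_X]
    rw [← Finset.prod_pow, ← Finset.prod_pow]
    congr 1
    exact Finset.prod_congr rfl (fun i _ => by ring)
  have hd : T.natDegree < 3 * n := by
    have h3 := Polynomial.natDegree_pow_le_of_le 2 (ang_prod_deg L ad.x)
    have := Polynomial.natDegree_mul_le_of_le h3 hSd
    simp only [T]
    omega
  have hq := ang_quad ad hn hmom T hd
  have hpos : 0 ≤ ∫ t, T.eval t ∂μ₁ := by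
    apply integral_nonneg_of_ae
    filter_upwards [hsupp] with t ht
    rw [hTe]
    refine mul_nonneg (sq_nonneg _) (hS0 t (fun i hi => ?_))
    have := (ad.mem2 i (by simpa [U] using hi)).1
    linarith [ht.2]
  have h1 := ang_quad ad hn hmom 1 (by simp; omega)
  simp only [Polynomial.eval_one, mul_one, integral_const, smul_eq_mul] at h1
  have hsplit : ∀ g : Fin (2 * n) → ℝ, ∑ i, g i = ∑ i ∈ L, g i + ∑ i ∈ U, g i := by
    intro g
    rw [← Finset.sum_filter_add_sum_filter_not Finset.univ (fun i : Fin (2 * n) => (i : ℕ) < n)]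
    simp only [not_lt, L, U]
  rw [hsplit] at h1 hq
  have hz : ∑ i ∈ L, qweight ad μ₁ i * T.eval (ad.x i) = 0 :=
    Finset.sum_eq_zero (fun i hi => by
      rw [hTe, Finset.prod_eq_zero hi (sub_self _)]; simp)
  have hu : ∑ i ∈ U, qweight ad μ₁ i * T.eval (ad.x i) = ∑ i ∈ U, qweight ad μ₁ i :=
    Finset.sum_congr rfl (fun i hi => by rw [hTe, hS1 i hi, mul_one])
  rw [hz, hu] at hq
  linarith

/-- **Convergence of the restricted first quadrature rule** (Theorem 3.1).
Let `f` be continuous on `[a₁,b₁]`, vanishing on `[b*,b₁]`, and suppose `f` can be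
approximated uniformly on `[a₁,b₁]` by weighted polynomials `Rₙ qₙ` with `deg Rₙ ≤ n`,
where `qₙ(y) = ∏_{i=n+1}^{2n} (x_{i,2n} − y)`.  Then
`∑_{j=1}^{n} λ_{j,2n}^{(1)} f(x_{j,2n}) → ∫_{[a₁,b₁]} f dμ₁`. -/
theorem angelesco_quadrature_convergence_weighted_approx
    (μ₁ μ₂ : Measure ℝ) [IsFiniteMeasure μ₁] [IsFiniteMeasure μ₂]
    (a₁ b₁ a₂ b₂ : ℝ) (hab₁ : a₁ < b₁) (hgap : b₁ ≤ a₂) (hab₂ : a₂ < b₂)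
    (hsupp₁ : μ₁ (Set.Icc a₁ b₁)ᶜ = 0) (hsupp₂ : μ₂ (Set.Icc a₂ b₂)ᶜ = 0)
    (hinf₁ : ∀ s : Finset ℝ, μ₁ ((s : Set ℝ))ᶜ ≠ 0)
    (hinf₂ : ∀ s : Finset ℝ, μ₂ ((s : Set ℝ))ᶜ ≠ 0)
    (hmom₁ : ∀ k : ℕ, Integrable (fun t : ℝ => t ^ k) μ₁)
    (hmom₂ : ∀ k : ℕ, Integrable (fun t : ℝ => t ^ k) μ₂)
    (ad : ∀ n : ℕ, Angelesco μ₁ μ₂ a₁ b₁ a₂ b₂ n)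
    (f : ℝ → ℝ) (hf : ContinuousOn f (Set.Icc a₁ b₁))
    (bstar : ℝ) (hbstar : bstar ∈ Set.Ioc a₁ b₁)
    (hf0 : ∀ t ∈ Set.Icc bstar b₁, f t = 0)
    (R : ℕ → Polynomial ℝ) (hRdeg : ∀ n, (R n).natDegree ≤ n)
    (happrox : ∀ ε > (0 : ℝ), ∃ N : ℕ, ∀ n ≥ N, ∀ y ∈ Set.Icc a₁ b₁,
      |f y - (R n).eval y *
        ∏ i ∈ Finset.univ.filter (fun i : Fin (2 * n) => n ≤ (i : ℕ)),
          ((ad n).x i - y)| ≤ ε) :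
    Filter.Tendsto
      (fun n : ℕ => ∑ i ∈ Finset.univ.filter (fun i : Fin (2 * n) => (i : ℕ) < n),
        qweight (ad n) μ₁ i * f ((ad n).x i))
      Filter.atTop (nhds (∫ t in Set.Icc a₁ b₁, f t ∂μ₁)) := by
  have hae : ∀ᵐ t ∂μ₁, t ∈ Set.Icc a₁ b₁ := by
    rw [ae_iff]; exact hsupp₁
  have hfint : Integrable f μ₁ := by
    have := hf.integrableOn_Icc (μ := μ₁)
    rwa [IntegrableOn, Measure.restrict_eq_self_of_ae_mem hae] at this
  rw [Measure.restrict_eq_self_of_ae_mem hae]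
  rw [Metric.tendsto_atTop]
  intro ε hε
  set M := μ₁.real Set.univ with hM
  have hM0 : 0 ≤ M := measureReal_nonneg
  obtain ⟨N, hN⟩ := happrox (ε / (2 * M + 1)) (by positivity)
  refine ⟨max N 1, fun n hn => ?_⟩
  have hn1 : 1 ≤ n := le_trans (le_max_right _ _) hn
  have hA := hN n (le_trans (le_max_left _ _) hn)
  set δ := ε / (2 * M + 1) with hδ
  have hδ0 : 0 < δ := by positivity
  set L := Finset.univ.filter (fun i : Fin (2 * n) => (i : ℕ) < n) with hLdef
  set U := Finset.univ.filter (fun i : Fin (2 * n) => n ≤ (i : ℕ)) with hUdef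
  let G : Polynomial ℝ := R n * ∏ i ∈ U, (Polynomial.C ((ad n).x i) - Polynomial.X)
  have hGe : ∀ t, G.eval t = (R n).eval t * ∏ i ∈ U, ((ad n).x i - t) := by
    intro t; simp [G, Polynomial.eval_prod]
  have hGd : G.natDegree < 3 * n := by
    have h1 := ang_prod_deg U (ad n).x
    have := Polynomial.natDegree_mul_le_of_le (hRdeg n) h1
    have hU : U.card = n := (ang_card_right n).1
    simp only [G]
    omega
  have hq := ang_quad (ad n) hn1 hmom₁ G hGd
  have hqL : ∑ k ∈ L, qweight (ad n) μ₁ k * G.eval ((ad n).x k) = ∫ t, G.eval t ∂μ₁ := by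
    rw [← hq]
    refine Finset.sum_subset (Finset.subset_univ _) (fun i _ hi => ?_)
    rw [hGe, Finset.prod_eq_zero (s := U) (i := i) (by
      simp only [L, U, Finset.mem_filter, Finset.mem_univ, true_and] at hi ⊢
      omega) (sub_self _)]
    simp
  have hA' : ∀ y ∈ Set.Icc a₁ b₁, |f y - G.eval y| ≤ δ := fun y hy => by
    rw [hGe]; exact hA y hy
  have hGi := ang_integrable_poly μ₁ hmom₁ G
  have e1 : |∑ i ∈ L, qweight (ad n) μ₁ i * f ((ad n).x i)
      - ∑ i ∈ L, qweight (ad n) μ₁ i * G.eval ((ad n).x i)| ≤ δ * M := by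
    rw [← Finset.sum_sub_distrib]
    refine (Finset.abs_sum_le_sum_abs _ _).trans ?_
    have hs := ang_weight_sum hgap hae (ad n) hn1 hmom₁
    calc _ ≤ ∑ i ∈ L, δ * qweight (ad n) μ₁ i := by
          refine Finset.sum_le_sum (fun i hi => ?_)
          have hi' : (i : ℕ) < n := by simpa [L] using hi
          have hw := ang_weight_nonneg hgap hae (ad n) hn1 hmom₁ i hi'
          rw [← mul_sub, abs_mul, abs_of_nonneg hw, mul_comm δ]
          exact mul_le_mul_of_nonneg_left
            (hA' _ (Set.Ioo_subset_Icc_self ((ad n).mem1 i hi'))) hw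
      _ ≤ δ * M := by
          rw [← Finset.mul_sum]
          exact mul_le_mul_of_nonneg_left hs hδ0.le
  have e2 : |∫ t, f t ∂μ₁ - ∫ t, G.eval t ∂μ₁| ≤ δ * M := by
    rw [← integral_sub hfint hGi]
    have := norm_integral_le_of_norm_le_const (μ := μ₁) (f := fun t => f t - G.eval t) (C := δ)
      (by filter_upwards [hae] with t ht using hA' t ht)
    simpa using this
  rw [hqL] at e1
  rw [Real.dist_eq]
  have e3 : δ * (2 * M + 1) = ε := by rw [hδ]; field_simp
  rw [abs_le] at e1 e2
  rw [abs_lt]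
  constructor <;> linarith [e1.1, e1.2, e2.1, e2.2]
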